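/- arXiv:2002.02876 — 2 statements merged into one kernel-verified Lean document; each statement's English description precedes it below -/
import Mathlib

section
/- Assume |μ|·√(kT/K) ≤ Γσ for every k ∈ {1,…,K}. Then U_1 ∩ W = U_1 ∩ V(U_1); consequently U_1 ∩ W ⊆ A(U_1 ∩ W), i.e., the modified uncertainty set U_1' := U_1 ∩ W gives rise to a worst-case risk measure satisfying the bounded (conditional) market risk property. -/
open scoped BigOperators

/-- The length-`k` prefix of `w` belongs to the prefix set `U_{1:k}`
(only the first `k` coordinates of `w` are relevant). -/
def prefixMem {K : ℕ} (U : Set (Fin K → ℝ)) (k : ℕ) (w : ℕ → ℝ) : Prop :=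
  ∃ r ∈ U, ∀ i : Fin K, (i : ℕ) < k → r i = w i

/-- The one-step projection `U_{k+1}(w)` of `U` given the length-`k` prefix `w`. -/
def oneStep {K : ℕ} (U : Set (Fin K → ℝ)) (k : ℕ) (w : ℕ → ℝ) : Set ℝ :=
  {s | ∃ r ∈ U, (∀ i : Fin K, (i : ℕ) < k → r i = w i) ∧ ∀ h : k < K, r ⟨k, h⟩ = s}

/-- The game values `π^U_k(w)`, defined backward from `π^U_K = 0` by
`π^U_k(w) = inf_{ζ ∈ ℝ} sup_{s ∈ U_{k+1}(w)} (-ζ·s + π^U_{k+1}(w⌢s))`,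
with values in the extended reals (the supremum over the empty set being `⊥`).
Only the first `k` coordinates of `w` are relevant. -/
noncomputable def piVal {K : ℕ} (U : Set (Fin K → ℝ)) (k : ℕ) (w : ℕ → ℝ) : EReal :=
  if h : k < K then
    ⨅ ζ : ℝ, ⨆ s ∈ oneStep U k w,
      (((-ζ * s : ℝ) : EReal) + piVal U (k + 1) (Function.update w k s))
  else 0
  termination_by K - k
  decreasing_by omega

/-- A vector `r ∈ ℝ^K` seen as a prefix function `ℕ → ℝ` (padded with zeros). -/
def padR {K : ℕ} (r : Fin K → ℝ) : ℕ → ℝ := fun i => if h : i < K then r ⟨i, h⟩ else 0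

/-- `r_{1:k}⌢0_{K-k}`: the first `k` coordinates of `r` padded with zeros. -/
def zeroPad {K : ℕ} (r : Fin K → ℝ) (k : ℕ) : Fin K → ℝ :=
  fun i => if (i : ℕ) < k then r i else 0

/-- A length-`k` prefix `w : ℕ → ℝ` padded with zeros into a vector of `ℝ^K`. -/
def padPrefix (K : ℕ) (w : ℕ → ℝ) (k : ℕ) : Fin K → ℝ :=
  fun i => if (i : ℕ) < k then w i else 0

/-- `A(U)`: the set of returns with bounded conditional market risk. -/
def Aset {K : ℕ} (U : Set (Fin K → ℝ)) : Set (Fin K → ℝ) :=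
  {r | ∀ k : ℕ, k < K → ¬ prefixMem U k (padR r) ∨
    ((⊥ : EReal) < piVal U k (padR r) ∧ piVal U k (padR r) ≤ 0)}

/-- `V(U)`: the set of returns all of whose zero-padded prefixes remain in `U`
(whenever the prefix is realizable in `U`), together with `0 ∈ U`. -/
def Vset {K : ℕ} (U : Set (Fin K → ℝ)) : Set (Fin K → ℝ) :=
  {r | (0 : Fin K → ℝ) ∈ U ∧
    ∀ k : ℕ, 1 ≤ k → k ≤ K - 1 → zeroPad r k ∈ U ∨ ¬ prefixMem U k (padR r)}

/-!
For every `U`, membership of `r` in `U ∩ V(U)` says exactly that all zero-paddings of prefixes of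
`r` lie in `U`. Hence `U ∩ V(U)` is itself stable under zero-padding, so that after any realizable
prefix the adversary may play `s = 0` forever. This bounds the game values below by `0`, while the
strategy `ζ = 0` bounds them above by `0`.

Zero-padding from time `j` on freezes the cumulative log-return at its value at time `j`. All
paddings of `r` therefore lie in `U_1` exactly when each cumulative log-return lies in the current
and all later bands, which is `U_1 ∩ W`; the condition on `μ` puts `0` in every band and so takes
care of the empty prefix.
-/

section ZeroPadding

variable {K : ℕ}

theorem zeroPad_zero (r : Fin K → ℝ) : zeroPad r 0 = 0 := by
  funext i
  simp [zeroPad]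

theorem zeroPad_of_le (r : Fin K → ℝ) {k : ℕ} (hk : K ≤ k) : zeroPad r k = r := by
  funext i
  exact if_pos (i.isLt.trans_le hk)

theorem zeroPad_zeroPad (r : Fin K → ℝ) (j k : ℕ) :
    zeroPad (zeroPad r j) k = zeroPad r (min k j) := by
  funext i
  simp only [zeroPad, lt_min_iff, ite_and]

theorem prefixMem_padR {U : Set (Fin K → ℝ)} {r : Fin K → ℝ} (hr : r ∈ U) (k : ℕ) :
    prefixMem U k (padR r) :=
  ⟨r, hr, fun i _ => by simp [padR]⟩

theorem mem_inter_Vset_iff {U : Set (Fin K → ℝ)} {r : Fin K → ℝ} :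
    r ∈ U ∩ Vset U ↔ ∀ k, zeroPad r k ∈ U := by
  constructor
  · rintro ⟨hr, h0, hV⟩ k
    rcases Nat.eq_zero_or_pos k with rfl | hk
    · rwa [zeroPad_zero]
    rcases le_or_gt K k with hKk | hkK
    · rwa [zeroPad_of_le r hKk]
    · exact (hV k hk (Nat.le_sub_one_of_lt hkK)).resolve_right
        (not_not_intro (prefixMem_padR hr k))
  · intro h
    exact ⟨zeroPad_of_le r le_rfl ▸ h K, zeroPad_zero r ▸ h 0, fun k _ _ => Or.inl (h k)⟩

/-- Stability of a set of return vectors under replacing all returns from some time on by zero. -/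
def ZeroPadClosed (U : Set (Fin K → ℝ)) : Prop :=
  ∀ r ∈ U, ∀ k, zeroPad r k ∈ U

theorem zeroPadClosed_inter_Vset (U : Set (Fin K → ℝ)) : ZeroPadClosed (U ∩ Vset U) := by
  intro r hr k
  rw [mem_inter_Vset_iff] at hr ⊢
  intro j
  rw [zeroPad_zeroPad]
  exact hr _

end ZeroPadding

section GameValue

variable {K : ℕ} {U : Set (Fin K → ℝ)}

theorem piVal_nonpos (U : Set (Fin K → ℝ)) (k : ℕ) (w : ℕ → ℝ) : piVal U k w ≤ 0 := by
  induction k, w using piVal.induct (K := K) with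
  | case1 k w hk ih =>
    rw [piVal, dif_pos hk]
    refine iInf_le_of_le 0 (iSup₂_le fun s _ => ?_)
    simpa using ih s
  | case2 k w hk => rw [piVal, dif_neg hk]

theorem ZeroPadClosed.zero_mem_oneStep (hU : ZeroPadClosed U) {k : ℕ} {w : ℕ → ℝ}
    (hw : prefixMem U k w) : 0 ∈ oneStep U k w := by
  obtain ⟨r, hr, hrw⟩ := hw
  refine ⟨zeroPad r k, hU r hr k, fun i hi => ?_, fun _ => by simp [zeroPad]⟩
  simp [zeroPad, hi, hrw i hi]

theorem prefixMem_update_of_mem_oneStep {k : ℕ} {w : ℕ → ℝ} {s : ℝ}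
    (hs : s ∈ oneStep U k w) : prefixMem U (k + 1) (Function.update w k s) := by
  obtain ⟨r, hr, hrw, hrs⟩ := hs
  refine ⟨r, hr, fun i hi => ?_⟩
  rcases Nat.lt_succ_iff_lt_or_eq.mp hi with hik | rfl
  · rw [Function.update_of_ne hik.ne, hrw i hik]
  · rw [Function.update_self, ← hrs i.isLt]

theorem ZeroPadClosed.piVal_nonneg (hU : ZeroPadClosed U) {k : ℕ} {w : ℕ → ℝ}
    (hw : prefixMem U k w) : 0 ≤ piVal U k w := by
  induction k, w using piVal.induct (K := K) with
  | case1 k w hk ih =>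
    have h0 := hU.zero_mem_oneStep hw
    rw [piVal, dif_pos hk]
    refine le_iInf fun ζ => le_iSup₂_of_le 0 h0 ?_
    simpa using ih 0 (prefixMem_update_of_mem_oneStep h0)
  | case2 k w hk => rw [piVal, dif_neg hk]

theorem ZeroPadClosed.Aset_eq_univ (hU : ZeroPadClosed U) : Aset U = Set.univ := by
  refine Set.eq_univ_of_forall fun r k _ => or_iff_not_imp_left.mpr fun hr => ?_
  exact ⟨EReal.bot_lt_zero.trans_le (hU.piVal_nonneg (not_not.mp hr)), piVal_nonpos U k _⟩

end GameValue

section Bands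

variable {K : ℕ} {M : Type*} [AddCommMonoid M]

/-- The cumulative sum `f(r_1) + ⋯ + f(r_k)`; the cumulative log-return is the case
`f x = log (1 + x)`. -/
def prefixSum (f : ℝ → M) (r : Fin K → ℝ) (k : ℕ) : M :=
  ∑ i ∈ Finset.univ.filter (fun i : Fin K => (i : ℕ) < k), f (r i)

/-- The uncertainty set of returns in `D` whose cumulative sum at each time `k ∈ {1,…,K}` lies in
the band `B k`, generalizing `U_1`. -/
def bandSet (K : ℕ) (D : Set ℝ) (f : ℝ → M) (B : ℕ → Set M) : Set (Fin K → ℝ) :=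
  {r | (∀ i, r i ∈ D) ∧ ∀ k : ℕ, 1 ≤ k → k ≤ K → prefixSum f r k ∈ B k}

/-- The set of returns in `D` whose cumulative sum at each time `k ≥ 1` lies in all the bands
`B k'` of the later times `k' ∈ {k+1,…,K}`, generalizing `W`. -/
def laterBandSet (K : ℕ) (D : Set ℝ) (f : ℝ → M) (B : ℕ → Set M) : Set (Fin K → ℝ) :=
  {r | (∀ i, r i ∈ D) ∧ ∀ k k' : ℕ, 1 ≤ k → k < k' → k' ≤ K → prefixSum f r k ∈ B k'}

variable {D : Set ℝ} {f : ℝ → M} {B : ℕ → Set M}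

theorem prefixSum_zero (f : ℝ → M) (r : Fin K → ℝ) : prefixSum f r 0 = 0 := by
  simp [prefixSum]

theorem prefixSum_zeroPad (hf : f 0 = 0) (r : Fin K → ℝ) (j k : ℕ) :
    prefixSum f (zeroPad r j) k = prefixSum f r (min k j) := by
  simp only [prefixSum, Finset.sum_filter, zeroPad, lt_min_iff, ite_and, apply_ite f, hf]

theorem mem_bandSet_inter_laterBandSet_iff {r : Fin K → ℝ} :
    r ∈ bandSet K D f B ∩ laterBandSet K D f B ↔
      (∀ i, r i ∈ D) ∧ ∀ k k' : ℕ, 1 ≤ k → k ≤ k' → k' ≤ K → prefixSum f r k ∈ B k' := by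
  constructor
  · rintro ⟨⟨hD, hcurrent⟩, -, hlater⟩
    refine ⟨hD, fun k k' hk hkk' hk' => ?_⟩
    rcases hkk'.eq_or_lt with rfl | hlt
    · exact hcurrent k hk hk'
    · exact hlater k k' hk hlt hk'
  · rintro ⟨hD, hB⟩
    exact ⟨⟨hD, fun k hk => hB k k hk le_rfl⟩, hD, fun k k' hk hkk' => hB k k' hk hkk'.le⟩

theorem zeroPad_mem_bandSet (hD : 0 ∈ D) (hf : f 0 = 0)
    (hB : ∀ k : ℕ, 1 ≤ k → k ≤ K → 0 ∈ B k) {r : Fin K → ℝ}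
    (hr : r ∈ bandSet K D f B ∩ laterBandSet K D f B) (j : ℕ) :
    zeroPad r j ∈ bandSet K D f B := by
  obtain ⟨hrD, hrB⟩ := mem_bandSet_inter_laterBandSet_iff.mp hr
  refine ⟨fun i => ?_, fun k hk hkK => ?_⟩
  · unfold zeroPad
    split_ifs
    exacts [hrD i, hD]
  · rw [prefixSum_zeroPad hf]
    rcases Nat.eq_zero_or_pos j with rfl | hj
    · rw [Nat.min_zero, prefixSum_zero]
      exact hB k hk hkK
    · exact hrB _ k (le_min hk hj) (min_le_left k j) hkK

theorem mem_laterBandSet_of_forall_zeroPad_mem (hf : f 0 = 0) {r : Fin K → ℝ}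
    (hr : ∀ j, zeroPad r j ∈ bandSet K D f B) : r ∈ laterBandSet K D f B := by
  refine ⟨(zeroPad_of_le r le_rfl ▸ hr K).1, fun k k' hk hkk' hk' => ?_⟩
  have hfrozen := (hr k).2 k' (hk.trans hkk'.le) hk'
  rwa [prefixSum_zeroPad hf, min_eq_right hkk'.le] at hfrozen

theorem bandSet_inter_laterBandSet_eq_inter_Vset (hD : 0 ∈ D) (hf : f 0 = 0)
    (hB : ∀ k : ℕ, 1 ≤ k → k ≤ K → 0 ∈ B k) :
    bandSet K D f B ∩ laterBandSet K D f B = bandSet K D f B ∩ Vset (bandSet K D f B) := by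
  ext r
  constructor
  · intro hr
    exact mem_inter_Vset_iff.mpr (zeroPad_mem_bandSet hD hf hB hr)
  · intro hr
    exact ⟨hr.1, mem_laterBandSet_of_forall_zeroPad_mem hf (mem_inter_Vset_iff.mp hr)⟩

theorem stmt_13_general (hD : 0 ∈ D) (hf : f 0 = 0)
    (hB : ∀ k : ℕ, 1 ≤ k → k ≤ K → 0 ∈ B k) :
    bandSet K D f B ∩ laterBandSet K D f B = bandSet K D f B ∩ Vset (bandSet K D f B) ∧
      bandSet K D f B ∩ laterBandSet K D f B ⊆ Aset (bandSet K D f B ∩ laterBandSet K D f B) := by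
  have hV := bandSet_inter_laterBandSet_eq_inter_Vset hD hf hB
  refine ⟨hV, ?_⟩
  rw [hV, (zeroPadClosed_inter_Vset _).Aset_eq_univ]
  exact Set.subset_univ _

end Bands

/-- The band for the cumulative log-return at time `k`: within `Γ` standard deviations of its mean,
for drift `μ` and volatility `σ` over `K` periods of total length `T`. -/
def logReturnBand (K : ℕ) (T μ σ Γ : ℝ) (k : ℕ) : Set ℝ :=
  {x | |x - μ * k * T / K| ≤ Γ * σ * Real.sqrt (k * T / K)}

theorem zero_mem_logReturnBand {K k : ℕ} {T μ σ Γ : ℝ} (hT : 0 ≤ T)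
    (h : |μ| * Real.sqrt (k * T / K) ≤ Γ * σ) : 0 ∈ logReturnBand K T μ σ Γ k := by
  have hτ : (0 : ℝ) ≤ k * T / K := by positivity
  calc |0 - μ * k * T / K| = |μ * (k * T / K)| := by rw [zero_sub, abs_neg]; ring_nf
    _ = |μ| * Real.sqrt (k * T / K) * Real.sqrt (k * T / K) := by
      rw [abs_mul, abs_of_nonneg hτ, mul_assoc, Real.mul_self_sqrt hτ]
    _ ≤ Γ * σ * Real.sqrt (k * T / K) := by gcongr

/-- under the condition `|μ|·√(kT/K) ≤ Γσ` for all `k ∈ {1,…,K}`, the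
modified uncertainty set `U_1' := U_1 ∩ W` coincides with `U_1 ∩ V(U_1)`, and
consequently `U_1 ∩ W ⊆ A(U_1 ∩ W)`: the associated worst-case risk measure satisfies
the bounded (conditional) market risk property. -/
theorem stmt_13 (K : ℕ) (hK : 1 ≤ K) (T μ σ Γ : ℝ)
    (hT : 0 < T) (hσ : 0 < σ) (hΓ : 0 ≤ Γ)
    (hcond : ∀ k : ℕ, 1 ≤ k → k ≤ K → |μ| * Real.sqrt (k * T / K) ≤ Γ * σ)
    (U1 W : Set (Fin K → ℝ))
    (hU1 : U1 = {r | (∀ i : Fin K, -1 < r i) ∧ ∀ k : ℕ, 1 ≤ k → k ≤ K →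
      |(∑ i ∈ Finset.univ.filter (fun i : Fin K => (i : ℕ) < k), Real.log (1 + r i))
          - μ * k * T / K|
        ≤ Γ * σ * Real.sqrt (k * T / K)})
    (hW : W = {r | (∀ i : Fin K, -1 < r i) ∧ ∀ k k' : ℕ, 1 ≤ k → k < k' → k' ≤ K →
      |(∑ i ∈ Finset.univ.filter (fun i : Fin K => (i : ℕ) < k), Real.log (1 + r i))
          - μ * k' * T / K|
        ≤ Γ * σ * Real.sqrt (k' * T / K)}) :
    U1 ∩ W = U1 ∩ Vset U1 ∧ U1 ∩ W ⊆ Aset (U1 ∩ W) := by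
  subst hU1 hW
  exact stmt_13_general (D := Set.Ioi (-1)) (f := fun x => Real.log (1 + x))
    (B := logReturnBand K T μ σ Γ) (by norm_num) (by norm_num)
    fun k hk hkK => zero_mem_logReturnBand hT.le (hcond k hk hkK)
end

section
/- The one-period ε-arbitrage problem inf_{(ξ,p_0)∈ℝ²} sup_{S_1∈[l,u]} |(S_1−Kstr)⁺ − p_0 − ξ(S_1−S_0)| has optimal value (u − Kstr)(Kstr − l)/(2(u − l)), and the infimum is attained at ξ* = (u − Kstr)/(u − l) and p_0* = (u − Kstr)/(u − l) · (S_0 − (Kstr + l)/2). -/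
/-!
Subtracting an affine function from a payoff `f` does not change the gap between `f` and its chord
over `[a, b]`. A residual bounded by `M` on `[a, b]` has chord gap at most `2 * M`, so no affine
hedge has worst-case error below half of any chord gap of `f`. If `f` is convex, its chord gap lies
between `0` and its maximum `δ`, hence the chord lowered by `δ / 2` has error exactly `δ / 2`.
The chord gap of the call payoff increases up to the strike and decreases after it.
-/

open Set

section Chord

variable {𝕜 : Type*} [Field 𝕜]

/-- The affine function interpolating `f` at `a` and `b`, evaluated at `x`. For `a = b` the slope is
`0` and the chord is the constant `f a`. -/
def chord (f : 𝕜 → 𝕜) (a b x : 𝕜) : 𝕜 :=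
  f a + slope f a b * (x - a)

/-- The height at `x` of the chord of `f` over `[a, b]` above the graph of `f`. It measures how far
`f` is from being affine and determines the optimal hedging error. -/
def chordGap (f : 𝕜 → 𝕜) (a b x : 𝕜) : 𝕜 :=
  chord f a b x - f x

variable {f : 𝕜 → 𝕜} {a b x M : 𝕜}

theorem chord_eq_weighted_sum (hab : a ≠ b) (x : 𝕜) :
    chord f a b x = (b - x) / (b - a) * f a + (x - a) / (b - a) * f b := by
  have hba : b - a ≠ 0 := sub_ne_zero.2 hab.symm
  rw [chord, slope_def_field]
  field_simp
  ring

theorem chordGap_sub_affine (hab : a ≠ b) (p m s x : 𝕜) :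
    chordGap (fun y => f y - p - m * (y - s)) a b x = chordGap f a b x := by
  have hba : b - a ≠ 0 := sub_ne_zero.2 hab.symm
  simp only [chordGap, chord_eq_weighted_sum hab]
  field_simp
  ring

theorem sub_lowered_chord_eq (f : 𝕜 → 𝕜) (a b s x d : 𝕜) :
    f x - (chord f a b s - d) - slope f a b * (x - s) = d - chordGap f a b x := by
  simp only [chordGap, chord]
  ring

variable [LinearOrder 𝕜] [IsStrictOrderedRing 𝕜]

theorem chord_le (hab : a < b) (hx : x ∈ Icc a b) (ha : f a ≤ M) (hb : f b ≤ M) :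
    chord f a b x ≤ M := by
  have hba : 0 < b - a := sub_pos.2 hab
  have hwa : 0 ≤ (b - x) / (b - a) := div_nonneg (sub_nonneg.2 hx.2) hba.le
  have hwb : 0 ≤ (x - a) / (b - a) := div_nonneg (sub_nonneg.2 hx.1) hba.le
  calc chord f a b x
      = (b - x) / (b - a) * f a + (x - a) / (b - a) * f b := chord_eq_weighted_sum hab.ne x
    _ ≤ (b - x) / (b - a) * M + (x - a) / (b - a) * M :=
      add_le_add (mul_le_mul_of_nonneg_left ha hwa) (mul_le_mul_of_nonneg_left hb hwb)
    _ = M := by field_simp; ring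

theorem chordGap_le_two_mul (hab : a < b) (hx : x ∈ Icc a b) (hf : ∀ y ∈ Icc a b, |f y| ≤ M) :
    chordGap f a b x ≤ 2 * M := by
  have hchord : chord f a b x ≤ M :=
    chord_le hab hx (abs_le.1 (hf a (left_mem_Icc.2 hab.le))).2
      (abs_le.1 (hf b (right_mem_Icc.2 hab.le))).2
  have hfx : -M ≤ f x := (abs_le.1 (hf x hx)).1
  rw [chordGap]
  linarith

theorem chordGap_nonneg (hf : ConvexOn 𝕜 (Icc a b) f) (hab : a < b) (hx : x ∈ Icc a b) :
    0 ≤ chordGap f a b x := by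
  have hba : 0 < b - a := sub_pos.2 hab
  have hconvex := hf.2 (left_mem_Icc.2 hab.le) (right_mem_Icc.2 hab.le)
    (div_nonneg (sub_nonneg.2 hx.2) hba.le) (div_nonneg (sub_nonneg.2 hx.1) hba.le)
    (by field_simp; ring)
  have hcombination : (b - x) / (b - a) * a + (x - a) / (b - a) * b = x := by
    field_simp
    ring
  simp only [smul_eq_mul, hcombination] at hconvex
  rwa [chordGap, chord_eq_weighted_sum hab.ne, sub_nonneg]

end Chord

section HedgingError

/-- The worst-case absolute deviation over `[a, b]` between the payoff `f` and a portfolio of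
initial value `p` holding `ξ` shares bought at price `s`. It is only meaningful when the deviation
is bounded, since `sSup` of an unbounded set is `0`. -/
noncomputable def hedgingError (f : ℝ → ℝ) (a b s ξ p : ℝ) : ℝ :=
  sSup ((fun x => |f x - p - ξ * (x - s)|) '' Icc a b)

variable {f : ℝ → ℝ} {a b c : ℝ}

theorem abs_sub_le_hedgingError (hf : ContinuousOn f (Icc a b)) (s ξ p : ℝ) {x : ℝ}
    (hx : x ∈ Icc a b) : |f x - p - ξ * (x - s)| ≤ hedgingError f a b s ξ p :=
  le_csSup (isCompact_Icc.image_of_continuousOn (by fun_prop)).bddAbove (mem_image_of_mem _ hx)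

theorem half_chordGap_le_hedgingError (hf : ContinuousOn f (Icc a b)) (hab : a < b)
    (hc : c ∈ Icc a b) (s ξ p : ℝ) : chordGap f a b c / 2 ≤ hedgingError f a b s ξ p := by
  have hgap := chordGap_le_two_mul hab hc fun x hx => abs_sub_le_hedgingError hf s ξ p hx
  rw [chordGap_sub_affine hab.ne] at hgap
  linarith

theorem hedgingError_lowered_chord (hcont : ContinuousOn f (Icc a b))
    (hconv : ConvexOn ℝ (Icc a b) f) (hab : a < b) (hc : c ∈ Icc a b)
    (hmax : IsMaxOn (chordGap f a b) (Icc a b) c) (s : ℝ) :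
    hedgingError f a b s (slope f a b) (chord f a b s - chordGap f a b c / 2) =
      chordGap f a b c / 2 := by
  refine le_antisymm ?_ (half_chordGap_le_hedgingError hcont hab hc s _ _)
  refine csSup_le ((nonempty_Icc.2 hab.le).image _) (forall_mem_image.2 fun x hx => ?_)
  have hnonneg : 0 ≤ chordGap f a b x := chordGap_nonneg hconv hab hx
  have hle : chordGap f a b x ≤ chordGap f a b c := hmax hx
  rw [sub_lowered_chord_eq, abs_le]
  constructor <;> linarith

theorem sInf_range_hedgingError (hcont : ContinuousOn f (Icc a b))
    (hconv : ConvexOn ℝ (Icc a b) f) (hab : a < b) (hc : c ∈ Icc a b)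
    (hmax : IsMaxOn (chordGap f a b) (Icc a b) c) (s : ℝ) :
    sInf (range fun q : ℝ × ℝ => hedgingError f a b s q.1 q.2) = chordGap f a b c / 2 :=
  IsLeast.csInf_eq ⟨⟨(_, _), hedgingError_lowered_chord hcont hconv hab hc hmax s⟩,
    forall_mem_range.2 fun q => half_chordGap_le_hedgingError hcont hab hc s q.1 q.2⟩

end HedgingError

section CallPayoff

/-- The payoff at terminal price `x` of a European call option with strike `K`. -/
def callPayoff (K x : ℝ) : ℝ :=
  max (x - K) 0

variable {l u K x : ℝ}

theorem callPayoff_of_le (hx : x ≤ K) : callPayoff K x = 0 :=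
  max_eq_right (sub_nonpos.2 hx)

theorem callPayoff_of_ge (hx : K ≤ x) : callPayoff K x = x - K :=
  max_eq_left (sub_nonneg.2 hx)

theorem continuous_callPayoff (K : ℝ) : Continuous (callPayoff K) := by
  unfold callPayoff
  fun_prop

theorem convexOn_callPayoff (K : ℝ) {s : Set ℝ} (hs : Convex ℝ s) :
    ConvexOn ℝ s (callPayoff K) :=
  ((convexOn_id hs).sub (concaveOn_const K hs)).sup (convexOn_const 0 hs)

theorem slope_callPayoff (hKl : l ≤ K) (hKu : K ≤ u) :
    slope (callPayoff K) l u = (u - K) / (u - l) := by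
  rw [slope_def_field, callPayoff_of_le hKl, callPayoff_of_ge hKu, sub_zero]

theorem chord_callPayoff (hKl : l ≤ K) (hKu : K ≤ u) (x : ℝ) :
    chord (callPayoff K) l u x = (u - K) / (u - l) * (x - l) := by
  rw [chord, slope_callPayoff hKl hKu, callPayoff_of_le hKl, zero_add]

theorem chordGap_callPayoff_of_le (hKl : l ≤ K) (hKu : K ≤ u) (hx : x ≤ K) :
    chordGap (callPayoff K) l u x = (u - K) / (u - l) * (x - l) := by
  rw [chordGap, chord_callPayoff hKl hKu, callPayoff_of_le hx, sub_zero]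

theorem chordGap_callPayoff_of_ge (hlu : l < u) (hKl : l ≤ K) (hKu : K ≤ u) (hx : K ≤ x) :
    chordGap (callPayoff K) l u x = (K - l) / (u - l) * (u - x) := by
  have hul : u - l ≠ 0 := (sub_pos.2 hlu).ne'
  rw [chordGap, chord_callPayoff hKl hKu, callPayoff_of_ge hx]
  field_simp
  ring

theorem isMaxOn_chordGap_callPayoff (hlu : l < u) (hKl : l ≤ K) (hKu : K ≤ u) (s : Set ℝ) :
    IsMaxOn (chordGap (callPayoff K) l u) s K := by
  refine isMaxOn_iff.2 fun x _ => ?_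
  have hul : 0 ≤ u - l := sub_nonneg.2 hlu.le
  rcases le_total x K with hxK | hKx
  · have hslope : 0 ≤ (u - K) / (u - l) := div_nonneg (sub_nonneg.2 hKu) hul
    rw [chordGap_callPayoff_of_le hKl hKu hxK, chordGap_callPayoff_of_le hKl hKu le_rfl]
    exact mul_le_mul_of_nonneg_left (sub_le_sub_right hxK l) hslope
  · have hslope : 0 ≤ (K - l) / (u - l) := div_nonneg (sub_nonneg.2 hKl) hul
    rw [chordGap_callPayoff_of_ge hlu hKl hKu hKx, chordGap_callPayoff_of_ge hlu hKl hKu le_rfl]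
    exact mul_le_mul_of_nonneg_left (sub_le_sub_left hKx u) hslope

theorem half_chordGap_callPayoff_strike (hKl : l ≤ K) (hKu : K ≤ u) :
    chordGap (callPayoff K) l u K / 2 = (u - K) * (K - l) / (2 * (u - l)) := by
  rw [chordGap_callPayoff_of_le hKl hKu le_rfl, div_mul_eq_mul_div, div_div, mul_comm 2]

theorem lowered_chord_callPayoff (hKl : l ≤ K) (hKu : K ≤ u) (s : ℝ) :
    chord (callPayoff K) l u s - chordGap (callPayoff K) l u K / 2 =
      (u - K) / (u - l) * (s - (K + l) / 2) := by
  rw [chord_callPayoff hKl hKu, chordGap_callPayoff_of_le hKl hKu le_rfl]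
  ring

end CallPayoff

theorem stmt_18_general (l u S0 Kstr : ℝ) (hlu : l < u)
    (hKl : l ≤ Kstr) (hKu : Kstr ≤ u) :
    sInf (Set.range fun q : ℝ × ℝ =>
        sSup ((fun S1 : ℝ => |max (S1 - Kstr) 0 - q.2 - q.1 * (S1 - S0)|) '' Set.Icc l u))
      = (u - Kstr) * (Kstr - l) / (2 * (u - l)) ∧
    sSup ((fun S1 : ℝ =>
        |max (S1 - Kstr) 0 - ((u - Kstr) / (u - l)) * (S0 - (Kstr + l) / 2)
          - ((u - Kstr) / (u - l)) * (S1 - S0)|) '' Set.Icc l u)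
      = (u - Kstr) * (Kstr - l) / (2 * (u - l)) := by
  have hcont := (continuous_callPayoff Kstr).continuousOn (s := Icc l u)
  have hconv := convexOn_callPayoff Kstr (convex_Icc l u)
  have hmax := isMaxOn_chordGap_callPayoff hlu hKl hKu (Icc l u)
  have hvalue := sInf_range_hedgingError hcont hconv hlu ⟨hKl, hKu⟩ hmax S0
  have hattained := hedgingError_lowered_chord hcont hconv hlu ⟨hKl, hKu⟩ hmax S0
  rw [lowered_chord_callPayoff hKl hKu, slope_callPayoff hKl hKu] at hattained
  rw [half_chordGap_callPayoff_strike hKl hKu] at hvalue hattained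
  exact ⟨hvalue, hattained⟩

/-- the one-period ε-arbitrage problem
`inf_{(ξ,p₀) ∈ ℝ²} sup_{S₁ ∈ [l,u]} |(S₁ - Kstr)⁺ - p₀ - ξ(S₁ - S₀)|` has optimal value
`(u - Kstr)(Kstr - l)/(2(u - l))`, attained at `ξ* = (u - Kstr)/(u - l)` and
`p₀* = (u - Kstr)/(u - l) · (S₀ - (Kstr + l)/2)`. -/
theorem stmt_18 (l u S0 Kstr : ℝ) (hlu : l < u)
    (hS0l : l ≤ S0) (hS0u : S0 ≤ u) (hKl : l ≤ Kstr) (hKu : Kstr ≤ u) :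
    sInf (Set.range fun q : ℝ × ℝ =>
        sSup ((fun S1 : ℝ => |max (S1 - Kstr) 0 - q.2 - q.1 * (S1 - S0)|) '' Set.Icc l u))
      = (u - Kstr) * (Kstr - l) / (2 * (u - l)) ∧
    sSup ((fun S1 : ℝ =>
        |max (S1 - Kstr) 0 - ((u - Kstr) / (u - l)) * (S0 - (Kstr + l) / 2)
          - ((u - Kstr) / (u - l)) * (S1 - S0)|) '' Set.Icc l u)
      = (u - Kstr) * (Kstr - l) / (2 * (u - l)) :=
  stmt_18_general l u S0 Kstr hlu hKl hKu
end
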